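/- (Kirkwood closure process: graph representation of the kernels ω, equations (4.5)–(4.6).) Let d ≥ 1, ς > 0 and let g : ℝ^d → [0,∞) be an even function; set h := g − 1. Define ρ^{(0)} = 1 and ρ^{(n)}(x₁,…,x_n) := ς^n ∏_{1 ≤ i < j ≤ n} g(x_i − x_j), and let ρ_T ∈ A₀ be the unique functional with ρ = exp∗ ρ_T. (i) For x ∈ ℝ^d, let ω_x ∈ A₀ be the unique functional with D_x ρ_T = ς · exp∗ ω_x. Then for every k ≥ 1: ω_x^{(k)}(y₁,…,y_k) = ς^k Σ_{G ∈ 𝒞_{1,k}} ∏_{{i,j} ∈ E(G)} h(z_i − z_j), where the vertex set is {0,1,…,k} with z₀ = x and z_i = y_i for 1 ≤ i ≤ k, and 𝒞_{1,k} is the set of connected simple graphs on {0,1,…,k} whose induced subgraph on {1,…,k} is still connected. (ii) For x₁, x₂ ∈ ℝ^d with g(x₁ − x₂) ≠ 0, let ω_{(x₁,x₂)} ∈ A₀ be the unique functional satisfying D_{x₁,x₂} ρ_T / ρ^{(2)}(x₁,x₂) = ( exp∗ ω_{(x₁,x₂)} − (ς²/ρ^{(2)}(x₁,x₂)) 𝟙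 ) ∗ ( D_{x₁} ρ_T / ς ) ∗ ( D_{x₂} ρ_T / ς ), where ρ^{(2)}(x₁,x₂) = ς² g(x₁−x₂). Then for every k ≥ 1: ω_{(x₁,x₂)}^{(k)}(y₁,…,y_k) = ς^k Σ_{G ∈ 𝒞_{2,k}} ∏_{{i,j} ∈ E(G)} h(z_i − z_j), where the vertex set is {−1,0,1,…,k} with z_{−1} = x₁, z₀ = x₂, z_i = y_i for 1 ≤ i ≤ k, and 𝒞_{2,k} is the set of connected simple graphs on this vertex set that contain no edge between the vertices −1 and 0 and whose induced subgraph on {1,…,k} is still connected. -/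

import Mathlib

open MeasureTheory Finset

abbrev CF (E : Type) : Type := (n : ℕ) → (Fin n → E) → ℝ

namespace CF

variable {E : Type}

/-- Symmetry of a configuration functional under permutations of the arguments. -/
def IsSymm (F : CF E) : Prop :=
  ∀ (n : ℕ) (σ : Equiv.Perm (Fin n)) (x : Fin n → E), F n (x ∘ σ) = F n x

/-- The subtuple of `x` with indices in `I`, listed in increasing order. -/
noncomputable def sub {n : ℕ} (x : Fin n → E) (I : Finset (Fin n)) : Fin I.card → E :=
  fun i => x (I.orderIsoOfFin rfl i).1

/-- The convolution `Ψ ∗ Φ`. -/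
noncomputable def conv (Ψ Φ : CF E) : CF E :=
  fun n x => ∑ I : Finset (Fin n), Ψ I.card (sub x I) * Φ Iᶜ.card (sub x Iᶜ)

/-- The unit `𝟙`. -/
def unit : CF E := fun n _ => if n = 0 then 1 else 0

/-- Star-powers `Φ^{∗m}`. -/
noncomputable def starPow (Φ : CF E) : ℕ → CF E
  | 0 => unit
  | m + 1 => conv Φ (starPow Φ m)

/-- The star-exponential `exp∗ Φ = 𝟙 + Σ_{m≥1} Φ^{∗m}/m!`; on `A₀` the sum in the
`n`-th component is finite since `(Φ^{∗m})^{(n)} = 0` for `m > n`. -/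
noncomputable def starExp (Φ : CF E) : CF E :=
  fun n x => ∑ m ∈ Finset.range (n + 1), ((m.factorial : ℝ))⁻¹ * starPow Φ m n x

/-- The derivative `D_x`. -/
noncomputable def D (x : E) (Φ : CF E) : CF E := fun n y => Φ (n + 1) (Fin.cons x y)

/-- The second derivative `D_{x₁,x₂} = D_{x₁} ∘ D_{x₂}`. -/
noncomputable def D2 (x₁ x₂ : E) (Φ : CF E) : CF E := D x₁ (D x₂ Φ)

end CF

/-- Euclidean space `ℝ^d`. -/
abbrev Euc (d : ℕ) : Type := EuclideanSpace ℝ (Fin d)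

/-- The product measure on `Λ^n ⊆ (ℝ^d)^n` (Lebesgue measure restricted to `Λ`
in each coordinate). -/
noncomputable def piRestrict (d : ℕ) (Λ : Set (Euc d)) (n : ℕ) :
    MeasureTheory.Measure (Fin n → Euc d) :=
  MeasureTheory.Measure.pi fun _ => MeasureTheory.volume.restrict Λ

/-- Lebesgue measure on `(ℝ^d)^n`. -/
noncomputable def piVol (d : ℕ) (n : ℕ) : MeasureTheory.Measure (Fin n → Euc d) :=
  MeasureTheory.Measure.pi fun _ => MeasureTheory.volume

/-!
Configuration functionals form a commutative algebra under `∗`, on which `D_x` is a derivation and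
`M_x : F ↦ F · ∏ g(x - y_i)` is an endomorphism, so that `exp∗` commutes with `M_x`. The product
form of `ρ` reads `D_x ρ = ς · M_x ρ`. Dividing by `ρ = exp∗ ρ_T` gives
`D_x ρ_T = ς · exp∗ ((M_x - 1) ρ_T)`, hence `ω_x = (M_x - 1) ρ_T`; differentiating once more gives
`ω_{(x₁,x₂)} = (M_{x₂} - 1) (M_{x₁} - 1) ρ_T`.

Expanding `∏ (1 + h)` and collecting graphs by the connected component of one vertex identifies
`ρ_T` as the sum over connected graphs. The factor `∏ (1 + h(x - y_i)) - 1` by which `M_x - 1` acts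
is the sum over the nonempty sets of neighbours of a new vertex at `x`, which is how the graphs of
`𝒞_{1,k}` and `𝒞_{2,k}` arise from the connected ones.
-/

namespace CF

variable {E : Type}

/-- The value of `F` on the subtuple of `z` indexed by `S`; writing it as a function of `S` lets
rewriting act on `S` without disturbing the dependent type of the subtuple. -/
noncomputable def evalOn (F : CF E) {n : ℕ} (z : Fin n → E) (S : Finset (Fin n)) : ℝ :=
  F S.card (sub z S)

theorem evalOn_eq_of_strictMono (F : CF E) {m n : ℕ} (z : Fin n → E) {S : Finset (Fin n)}
    (hcard : S.card = m) {e : Fin m → Fin n} (he : StrictMono e) (hmem : ∀ i, e i ∈ S) :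
    evalOn F z S = F m (z ∘ e) := by
  subst hcard
  rw [orderEmbOfFin_unique rfl hmem he]
  rfl

theorem evalOn_cons_map_succ (F : CF E) {n : ℕ} (x : E) (y : Fin n → E) (J : Finset (Fin n)) :
    evalOn F (Fin.cons x y : Fin (n + 1) → E) (J.map (Fin.succEmb n)) = evalOn F y J := by
  rw [evalOn_eq_of_strictMono F _ (card_map _) (e := fun i => (J.orderEmbOfFin rfl i).succ)]
  · rfl
  · exact fun i j hij => by simpa using hij
  · exact fun i => by simp

theorem evalOn_cons_insert_zero (F : CF E) {n : ℕ} (x : E) (y : Fin n → E) (J : Finset (Fin n)) :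
    evalOn F (Fin.cons x y : Fin (n + 1) → E) (insert 0 (J.map (Fin.succEmb n))) =
      evalOn (D x F) y J := by
  rw [evalOn_eq_of_strictMono F _ (m := J.card + 1) (by rw [card_insert_of_notMem] <;> simp)
    (e := Fin.cons 0 fun i => (J.orderEmbOfFin rfl i).succ)]
  · refine congrArg (F (J.card + 1)) (funext fun i => ?_)
    cases i using Fin.cases <;> simp [sub]
  · intro i j
    cases i using Fin.cases <;> cases j using Fin.cases <;> simp
  · intro i
    cases i using Fin.cases <;> simp

theorem sum_finset_fin_succ {M : Type*} [AddCommMonoid M] {n : ℕ} (f : Finset (Fin (n + 1)) → M) :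
    ∑ I, f I = ∑ J : Finset (Fin n),
      (f (insert 0 (J.map (Fin.succEmb n))) + f (J.map (Fin.succEmb n))) := by
  have univ_eq_insert : (univ : Finset (Fin (n + 1))) = insert 0 (univ.map (Fin.succEmb n)) := by
    rw [Fin.univ_succ, cons_eq_insert]
    rfl
  have powerset_eq_map : (univ.map (Fin.succEmb n)).powerset =
      univ.map (Finset.mapEmbedding (Fin.succEmb n)).toEmbedding := by
    ext I
    simp [subset_map_iff, eq_comm]
  rw [← powerset_univ, univ_eq_insert, sum_powerset_insert (by simp), add_comm,
    ← sum_add_distrib, powerset_eq_map, sum_map]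
  rfl

theorem compl_map_succ {n : ℕ} (J : Finset (Fin n)) :
    (J.map (Fin.succEmb n))ᶜ = insert 0 (Jᶜ.map (Fin.succEmb n)) := by
  ext i
  cases i using Fin.cases <;> simp

theorem compl_insert_zero_map_succ {n : ℕ} (J : Finset (Fin n)) :
    (insert 0 (J.map (Fin.succEmb n)))ᶜ = Jᶜ.map (Fin.succEmb n) := by
  ext i
  cases i using Fin.cases <;> simp

theorem conv_apply (F G : CF E) {n : ℕ} (z : Fin n → E) :
    conv F G n z = ∑ I, evalOn F z I * evalOn G z Iᶜ := rfl

theorem D_conv (x : E) (F G : CF E) : D x (conv F G) = conv (D x F) G + conv F (D x G) := by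
  funext n y
  change conv F G (n + 1) (Fin.cons x y) = conv (D x F) G n y + conv F (D x G) n y
  simp only [conv_apply, sum_finset_fin_succ, ← sum_add_distrib, compl_map_succ,
    compl_insert_zero_map_succ, evalOn_cons_insert_zero, evalOn_cons_map_succ]

theorem conv_D_apply (x : E) (F G : CF E) {n : ℕ} (y : Fin n → E) :
    conv (D x F) G n y = ∑ S : Finset (Fin (n + 1)) with 0 ∈ S,
      evalOn F (Fin.cons x y : Fin (n + 1) → E) S *
        evalOn G (Fin.cons x y : Fin (n + 1) → E) Sᶜ := by
  have zero_notMem (J : Finset (Fin n)) : 0 ∉ J.map (Fin.succEmb n) := by simp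
  simp only [conv_apply, sum_filter, sum_finset_fin_succ, mem_insert_self, zero_notMem, if_true,
    if_false, add_zero, compl_insert_zero_map_succ, evalOn_cons_insert_zero, evalOn_cons_map_succ]

theorem conv_zero_apply (F G : CF E) (z : Fin 0 → E) : conv F G 0 z = F 0 z * G 0 z := by
  have evalOn_zero (H : CF E) (S : Finset (Fin 0)) : evalOn H z S = H 0 z :=
    (evalOn_eq_of_strictMono H z (card_eq_zero.2 (eq_empty_of_isEmpty S)) (e := id)
      strictMono_id fun i => i.elim0)
  simp only [conv_apply, Fintype.sum_unique, evalOn_zero]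

theorem succ_eq_of_D_eq {F G : CF E} {n : ℕ} (h : ∀ x, D x F n = D x G n) :
    F (n + 1) = G (n + 1) := by
  funext y
  simpa [D] using congrFun (h (y 0)) (Fin.tail y)

theorem D_unit (x : E) : D x (unit : CF E) = 0 := by
  funext n y
  simp [D, unit]

theorem conv_add_left (F G H : CF E) : conv (F + G) H = conv F H + conv G H := by
  funext n y
  simp [conv, add_mul, sum_add_distrib]

theorem conv_smul_left (c : ℝ) (F G : CF E) : conv (c • F) G = c • conv F G := by
  funext n y
  simp [conv, mul_assoc, mul_sum]

theorem conv_zero_left (F : CF E) : conv 0 F = 0 := by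
  funext n y
  simp [conv]

-- Since `D x` is a derivation, the ring laws follow by induction on the number of arguments.
theorem conv_comm (F G : CF E) : conv F G = conv G F := by
  funext n
  induction n generalizing F G with
  | zero => funext z; simp only [conv_zero_apply, mul_comm]
  | succ n ih =>
    refine succ_eq_of_D_eq fun x => ?_
    simp only [D_conv, Pi.add_apply]
    rw [ih, ih F, add_comm]

theorem conv_add_right (F G H : CF E) : conv F (G + H) = conv F G + conv F H := by
  simp only [conv_comm F, conv_add_left]

theorem conv_assoc (F G H : CF E) : conv (conv F G) H = conv F (conv G H) := by
  funext n
  induction n generalizing F G H with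
  | zero => funext z; simp only [conv_zero_apply, mul_assoc]
  | succ n ih =>
    refine succ_eq_of_D_eq fun x => ?_
    simp only [D_conv, conv_add_left, conv_add_right, Pi.add_apply, ih, add_assoc]

theorem unit_conv (F : CF E) : conv unit F = F := by
  funext n
  induction n generalizing F with
  | zero => funext z; simp [conv_zero_apply, unit]
  | succ n ih =>
    refine succ_eq_of_D_eq fun x => ?_
    rw [D_conv, D_unit, conv_zero_left, zero_add, ih]

theorem prod_sub {M : Type*} [CommMonoid M] {n : ℕ} (f : E → M) (z : Fin n → E)
    (I : Finset (Fin n)) : ∏ i, f (sub z I i) = ∏ i ∈ I, f (z i) := by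
  rw [← prod_coe_sort I]
  exact (I.orderIsoOfFin rfl).toEquiv.prod_comp fun j => f (z j)

/-- The algebra of configuration functionals under convolution. It is a type synonym of `CF E`,
which as a function type already carries the pointwise product. -/
def ConvAlg (E : Type) : Type := CF E

namespace ConvAlg

noncomputable instance : AddCommGroup (ConvAlg E) := inferInstanceAs (AddCommGroup (CF E))

noncomputable instance : Module ℝ (ConvAlg E) := inferInstanceAs (Module ℝ (CF E))

noncomputable instance : CommRing (ConvAlg E) where
  __ := (inferInstance : AddCommGroup (ConvAlg E))
  mul := conv
  one := unit
  mul_comm := conv_comm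
  mul_assoc := conv_assoc
  one_mul := unit_conv
  mul_one F := (conv_comm F unit).trans (unit_conv F)
  left_distrib := conv_add_right
  right_distrib := conv_add_left
  zero_mul := conv_zero_left
  mul_zero F := (conv_comm F 0).trans (conv_zero_left F)

noncomputable instance : Algebra ℝ (ConvAlg E) :=
  Algebra.ofModule conv_smul_left fun c F G => by
    rw [mul_comm, mul_comm F]
    exact conv_smul_left c G F

/-- Evaluation of a functional at the tuple `z`. -/
noncomputable def coeff {n : ℕ} (z : Fin n → E) : ConvAlg E →ₗ[ℝ] ℝ where
  toFun F := (F : CF E) n z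
  map_add' _ _ := rfl
  map_smul' _ _ := rfl

theorem ext {F G : ConvAlg E} (h : ∀ (n : ℕ) (z : Fin n → E), coeff z F = coeff z G) : F = G :=
  funext fun n => funext (h n)

theorem coeff_mul (F G : ConvAlg E) {n : ℕ} (z : Fin n → E) :
    coeff z (F * G) = ∑ I : Finset (Fin n), coeff (sub z I) F * coeff (sub z Iᶜ) G := rfl

/-- The algebra homomorphism `F ↦ F^{(0)}`, whose kernel is the ideal `A₀`. -/
noncomputable def constantCoeff : ConvAlg E →ₐ[ℝ] ℝ :=
  AlgHom.ofLinearMap (coeff Fin.elim0) rfl fun _ _ => conv_zero_apply _ _ _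

theorem coeff_fin_zero (F : ConvAlg E) (z : Fin 0 → E) : coeff z F = constantCoeff F := by
  rw [Subsingleton.elim z Fin.elim0]
  rfl

/-- The operator `D x` as a derivation of the convolution algebra. -/
noncomputable def deriv (x : E) : Derivation ℝ (ConvAlg E) (ConvAlg E) :=
  Derivation.mk'
    { toFun F := D x F
      map_add' _ _ := rfl
      map_smul' _ _ := rfl }
    fun F G => (D_conv x F G).trans <|
      (add_comm _ _).trans (congrArg (conv F (D x G) + ·) (conv_comm (D x F) G))

theorem coeff_deriv (x : E) (F : ConvAlg E) {n : ℕ} (y : Fin n → E) :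
    coeff y (deriv x F) = coeff (Fin.cons x y : Fin (n + 1) → E) F := rfl

theorem deriv_mul (x : E) (F G : ConvAlg E) :
    deriv x (F * G) = deriv x F * G + F * deriv x G := D_conv x F G

theorem coeff_deriv_mul (x : E) (F G : ConvAlg E) {n : ℕ} (y : Fin n → E) :
    coeff y (deriv x F * G) = ∑ S : Finset (Fin (n + 1)) with 0 ∈ S,
      coeff (sub (Fin.cons x y : Fin (n + 1) → E) S) F *
        coeff (sub (Fin.cons x y : Fin (n + 1) → E) Sᶜ) G := conv_D_apply x F G y

theorem coeff_fin_succ (F : ConvAlg E) {n : ℕ} (z : Fin (n + 1) → E) :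
    coeff z F = coeff (Fin.tail z) (deriv (z 0) F) := by
  rw [coeff_deriv, Fin.cons_self_tail]

theorem ext_deriv {F G : ConvAlg E} (h0 : constantCoeff F = constantCoeff G)
    (h : ∀ x, deriv x F = deriv x G) : F = G := by
  refine ext fun n z => ?_
  cases n with
  | zero => simp only [coeff_fin_zero, h0]
  | succ n => simp only [coeff_fin_succ, h]

theorem eq_of_deriv_eq_mul {F G : ConvAlg E} {a : E → ConvAlg E}
    (h0 : constantCoeff F = constantCoeff G) (hF : ∀ x, deriv x F = a x * F)
    (hG : ∀ x, deriv x G = a x * G) : F = G := by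
  refine ext fun n => ?_
  induction n using Nat.strong_induction_on with
  | _ n ih =>
    intro z
    cases n with
    | zero => rw [coeff_fin_zero, coeff_fin_zero, h0]
    | succ n =>
      rw [coeff_fin_succ, coeff_fin_succ, hF, hG, coeff_mul, coeff_mul]
      refine sum_congr rfl fun I _ => ?_
      rw [ih _ (Nat.lt_succ_of_le (card_finset_fin_le _))]

theorem deriv_pow_succ (x : E) (F : ConvAlg E) (m : ℕ) :
    deriv x (F ^ (m + 1)) = (m + 1 : ℝ) • (deriv x F * F ^ m) := by
  rw [Derivation.leibniz_pow, Nat.add_sub_cancel, smul_eq_mul, mul_comm,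
    ← Nat.cast_smul_eq_nsmul ℝ, Nat.cast_succ]

theorem coeff_pow_eq_zero {F : ConvAlg E} (h0 : constantCoeff F = 0) {m n : ℕ} (hnm : n < m)
    (z : Fin n → E) : coeff z (F ^ m) = 0 := by
  induction m generalizing n with
  | zero => exact absurd hnm n.not_lt_zero
  | succ m ih =>
    cases n with
    | zero => rw [coeff_fin_zero, map_pow, h0, zero_pow m.succ_ne_zero]
    | succ n =>
      rw [coeff_fin_succ, deriv_pow_succ, map_smul, coeff_mul, sum_eq_zero, smul_zero]
      intro I _
      rw [ih ((card_finset_fin_le _).trans_lt (Nat.lt_of_succ_lt_succ hnm)), mul_zero]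

/-- The star-exponential on the convolution algebra. It is meant for arguments in `A₀`, as
`starExp` cuts off the exponential series of the `n`-th component at the power `n`. -/
noncomputable def exp (F : ConvAlg E) : ConvAlg E := starExp F

theorem starPow_eq_pow (F : ConvAlg E) (m : ℕ) : starPow F m = F ^ m := by
  induction m with
  | zero => rfl
  | succ m ih => exact (congrArg (conv F) ih).trans (pow_succ' F m).symm

theorem coeff_exp {F : ConvAlg E} (h0 : constantCoeff F = 0) {n N : ℕ} (hnN : n ≤ N)
    (z : Fin n → E) :
    coeff z (exp F) = ∑ m ∈ range (N + 1), (m.factorial : ℝ)⁻¹ * coeff z (F ^ m) := by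
  have coeff_starPow (m : ℕ) : starPow F m n z = coeff z (F ^ m) :=
    congrArg (coeff z) (starPow_eq_pow F m)
  change ∑ m ∈ range (n + 1), (m.factorial : ℝ)⁻¹ * starPow F m n z = _
  simp only [coeff_starPow]
  refine sum_subset (range_mono (Nat.succ_le_succ hnN)) fun m _ hm => ?_
  rw [coeff_pow_eq_zero h0 (by simpa using hm), mul_zero]

theorem constantCoeff_exp {F : ConvAlg E} (h0 : constantCoeff F = 0) :
    constantCoeff (exp F) = 1 := by
  rw [← coeff_fin_zero _ Fin.elim0, coeff_exp h0 le_rfl]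
  simp [coeff_fin_zero]

theorem deriv_exp {F : ConvAlg E} (h0 : constantCoeff F = 0) (x : E) :
    deriv x (exp F) = deriv x F * exp F := by
  refine ext fun n y => ?_
  have coeff_deriv_term (m : ℕ) :
      ((m + 1).factorial : ℝ)⁻¹ * coeff y (deriv x (F ^ (m + 1))) =
        (m.factorial : ℝ)⁻¹ * coeff y (deriv x F * F ^ m) := by
    rw [deriv_pow_succ, map_smul, smul_eq_mul, Nat.factorial_succ]
    push_cast
    field_simp
  calc coeff y (deriv x (exp F))
      = ∑ m ∈ range (n + 1), (m.factorial : ℝ)⁻¹ * coeff y (deriv x F * F ^ m) := by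
        rw [coeff_deriv, coeff_exp h0 le_rfl, sum_range_succ']
        simp only [← coeff_deriv, coeff_deriv_term, pow_zero, Derivation.map_one_eq_zero, map_zero,
          mul_zero, add_zero]
    _ = coeff y (deriv x F * exp F) := by
        simp only [coeff_mul, mul_sum]
        rw [sum_comm]
        refine sum_congr rfl fun I _ => ?_
        rw [coeff_exp h0 (card_finset_fin_le _), mul_sum]
        exact sum_congr rfl fun m _ => mul_left_comm _ _ _

theorem exp_add {F G : ConvAlg E} (hF : constantCoeff F = 0) (hG : constantCoeff G = 0) :
    exp (F + G) = exp F * exp G := by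
  have hFG : constantCoeff (F + G) = 0 := by rw [map_add, hF, hG, add_zero]
  refine eq_of_deriv_eq_mul (a := fun x => deriv x (F + G)) ?_ (deriv_exp hFG) fun x => ?_
  · rw [map_mul, constantCoeff_exp hFG, constantCoeff_exp hF, constantCoeff_exp hG, mul_one]
  · rw [deriv_mul, deriv_exp hF, deriv_exp hG, map_add]
    ring

theorem exp_zero : exp (0 : ConvAlg E) = 1 :=
  eq_of_deriv_eq_mul (a := fun _ => 0) (by rw [constantCoeff_exp (map_zero _), map_one])
    (fun x => by rw [deriv_exp (map_zero _), map_zero])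
    fun x => by rw [Derivation.map_one_eq_zero, zero_mul]

theorem isUnit_exp {F : ConvAlg E} (hF : constantCoeff F = 0) : IsUnit (exp F) :=
  IsUnit.of_mul_eq_one (exp (-F)) <| by
    rw [← exp_add hF (by rw [map_neg, hF, neg_zero]), add_neg_cancel, exp_zero]

theorem exp_injOn : Set.InjOn exp {F : ConvAlg E | constantCoeff F = 0} := by
  intro F hF G hG h
  refine ext_deriv (hF.trans hG.symm) fun x => (isUnit_exp hF).mul_left_injective ?_
  change deriv x F * exp F = deriv x G * exp F
  rw [← deriv_exp hF, h, deriv_exp hG]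

/-- The endomorphism of the convolution algebra that multiplies `F^{(n)}(y)` by `∏ i, m (y i)`. -/
noncomputable def rescale (m : E → ℝ) : ConvAlg E →ₐ[ℝ] ConvAlg E :=
  AlgHom.ofLinearMap
    { toFun F := fun _ y => (∏ i, m (y i)) * coeff y F
      map_add' _ _ := ext fun _ _ => mul_add _ _ _
      map_smul' _ _ := ext fun _ _ => mul_left_comm _ _ _ }
    (by
      refine ext fun n y => ?_
      cases n with
      | zero => exact (congrArg (· * _) prod_empty).trans (one_mul _)
      | succ n => exact mul_zero _)
    fun F G => by
      refine ext fun n y => ?_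
      change (∏ i, m (y i)) * coeff y (F * G) = ∑ I : Finset (Fin n),
        (∏ i, m (sub y I i)) * coeff (sub y I) F * ((∏ i, m (sub y Iᶜ i)) * coeff (sub y Iᶜ) G)
      rw [coeff_mul, mul_sum]
      refine sum_congr rfl fun I _ => ?_
      rw [prod_sub, prod_sub, ← prod_mul_prod_compl I, mul_mul_mul_comm]

theorem coeff_rescale (m : E → ℝ) (F : ConvAlg E) {n : ℕ} (y : Fin n → E) :
    coeff y (rescale m F) = (∏ i, m (y i)) * coeff y F := rfl

theorem deriv_rescale (m : E → ℝ) (x : E) (F : ConvAlg E) :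
    deriv x (rescale m F) = m x • rescale m (deriv x F) := by
  refine ext fun n y => ?_
  simp only [coeff_deriv, coeff_rescale, map_smul, smul_eq_mul, Fin.prod_univ_succ, Fin.cons_zero,
    Fin.cons_succ, mul_assoc]

theorem constantCoeff_rescale (m : E → ℝ) (F : ConvAlg E) :
    constantCoeff (rescale m F) = constantCoeff F := by
  rw [← coeff_fin_zero _ Fin.elim0, coeff_rescale, Fin.prod_univ_zero, one_mul, coeff_fin_zero]

theorem rescale_exp (m : E → ℝ) {F : ConvAlg E} (hF : constantCoeff F = 0) :
    rescale m (exp F) = exp (rescale m F) := by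
  have hmF : constantCoeff (rescale m F) = 0 := (constantCoeff_rescale m F).trans hF
  refine eq_of_deriv_eq_mul (a := fun x => deriv x (rescale m F)) ?_ (fun x => ?_) (deriv_exp hmF)
  · rw [constantCoeff_rescale, constantCoeff_exp hF, constantCoeff_exp hmF]
  · rw [deriv_rescale, deriv_exp hF, map_mul, deriv_rescale, smul_mul_assoc]

/-- The difference operator `F ↦ rescale m F - F`; applied to `ρ_T` it produces the kernels. -/
noncomputable def rescaleDiff (m : E → ℝ) (F : ConvAlg E) : ConvAlg E := rescale m F - F

theorem coeff_rescaleDiff (m : E → ℝ) (F : ConvAlg E) {n : ℕ} (y : Fin n → E) :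
    coeff y (rescaleDiff m F) = (∏ i, m (y i) - 1) * coeff y F := by
  rw [rescaleDiff, map_sub, coeff_rescale, sub_one_mul]

theorem constantCoeff_rescaleDiff (m : E → ℝ) (F : ConvAlg E) :
    constantCoeff (rescaleDiff m F) = 0 := by
  rw [rescaleDiff, map_sub, constantCoeff_rescale, sub_self]

theorem deriv_rescaleDiff (m : E → ℝ) (x : E) (F : ConvAlg E) :
    deriv x (rescaleDiff m F) = m x • rescale m (deriv x F) - deriv x F := by
  rw [rescaleDiff, map_sub, deriv_rescale]

theorem exp_rescaleDiff_mul_exp (m : E → ℝ) {F : ConvAlg E} (hF : constantCoeff F = 0) :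
    exp (rescaleDiff m F) * exp F = rescale m (exp F) := by
  rw [← exp_add (constantCoeff_rescaleDiff m F) hF, rescaleDiff, sub_add_cancel, rescale_exp m hF]

section Truncation

variable {ς : ℝ} {m m₁ m₂ : E → ℝ} {x x₁ x₂ : E} {t w : ConvAlg E}

theorem deriv_eq_smul_exp_rescaleDiff (ht : constantCoeff t = 0)
    (hexp : deriv x (exp t) = ς • rescale m (exp t)) :
    deriv x t = ς • exp (rescaleDiff m t) := by
  refine (isUnit_exp ht).mul_left_injective ?_
  change deriv x t * exp t = ς • exp (rescaleDiff m t) * exp t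
  rw [← deriv_exp ht, hexp, smul_mul_assoc, exp_rescaleDiff_mul_exp m ht]

theorem eq_rescaleDiff_of_deriv_eq (hς : ς ≠ 0) (ht : constantCoeff t = 0)
    (hexp : deriv x (exp t) = ς • rescale m (exp t)) (hw : constantCoeff w = 0)
    (hderiv : deriv x t = ς • exp w) : w = rescaleDiff m t := by
  rw [deriv_eq_smul_exp_rescaleDiff ht hexp] at hderiv
  exact exp_injOn hw (constantCoeff_rescaleDiff m t) (smul_right_injective _ hς hderiv.symm)

theorem deriv_deriv_eq_smul_exp_rescaleDiff (ht : constantCoeff t = 0)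
    (hexp₁ : deriv x₁ (exp t) = ς • rescale m₁ (exp t))
    (hexp₂ : deriv x₂ (exp t) = ς • rescale m₂ (exp t)) :
    deriv x₁ (deriv x₂ t) =
      ς ^ 2 • ((m₂ x₁ • exp (rescaleDiff m₂ (rescaleDiff m₁ t)) - 1) *
        exp (rescaleDiff m₁ t) * exp (rescaleDiff m₂ t)) := by
  have hderiv₁ := deriv_eq_smul_exp_rescaleDiff ht hexp₁
  have hderiv₂ := deriv_eq_smul_exp_rescaleDiff ht hexp₂
  rw [hderiv₂, Derivation.map_smul, deriv_exp (constantCoeff_rescaleDiff m₂ t), deriv_rescaleDiff,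
    hderiv₁, map_smul, ← exp_rescaleDiff_mul_exp m₂ (constantCoeff_rescaleDiff m₁ t)]
  simp only [Algebra.smul_def, map_pow]
  ring

theorem eq_rescaleDiff_rescaleDiff_of_deriv_deriv_eq (hς : ς ≠ 0) (hm : m₂ x₁ ≠ 0)
    (ht : constantCoeff t = 0)
    (hexp₁ : deriv x₁ (exp t) = ς • rescale m₁ (exp t))
    (hexp₂ : deriv x₂ (exp t) = ς • rescale m₂ (exp t)) (hw : constantCoeff w = 0)
    (hderiv : (ς ^ 2 * m₂ x₁)⁻¹ • deriv x₁ (deriv x₂ t) =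
      (exp w - (ς ^ 2 / (ς ^ 2 * m₂ x₁)) • (1 : ConvAlg E)) * (ς⁻¹ • deriv x₁ t) *
        (ς⁻¹ • deriv x₂ t)) :
    w = rescaleDiff m₂ (rescaleDiff m₁ t) := by
  set κ := rescaleDiff m₂ (rescaleDiff m₁ t)
  have pow_ne : ς ^ 2 ≠ 0 := pow_ne_zero 2 hς
  have factor_eq : (m₂ x₁)⁻¹ • (m₂ x₁ • exp κ - 1) = exp κ - (m₂ x₁)⁻¹ • (1 : ConvAlg E) := by
    rw [smul_sub, inv_smul_smul₀ hm]
  rw [deriv_deriv_eq_smul_exp_rescaleDiff ht hexp₁ hexp₂, deriv_eq_smul_exp_rescaleDiff ht hexp₁,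
    deriv_eq_smul_exp_rescaleDiff ht hexp₂, inv_smul_smul₀ hς, inv_smul_smul₀ hς, mul_inv_rev,
    mul_smul, inv_smul_smul₀ pow_ne, div_mul_cancel_left₀ pow_ne, ← smul_mul_assoc,
    ← smul_mul_assoc, factor_eq] at hderiv
  have exp_eq := (isUnit_exp (constantCoeff_rescaleDiff m₁ t)).mul_left_injective
    ((isUnit_exp (constantCoeff_rescaleDiff m₂ t)).mul_left_injective hderiv)
  exact exp_injOn hw (constantCoeff_rescaleDiff m₂ _) (sub_left_injective exp_eq).symm

end Truncation

end ConvAlg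

end CF

namespace GraphExpansion

section Component

variable {V A B : Type*} {G : SimpleGraph V}

theorem connectedComponentMk_supp_eq_iff {S : Set V} {v : V} (hv : v ∈ S) :
    (G.connectedComponentMk v).supp = S ↔
      (G.induce S).Connected ∧ ∀ u ∈ S, ∀ w ∉ S, ¬G.Adj u w := by
  refine ⟨?_, fun ⟨hconn, hclosed⟩ => Set.Subset.antisymm (fun w hw => ?_) fun w hw => ?_⟩
  · rintro rfl
    exact ⟨SimpleGraph.ConnectedComponent.connected_toSimpleGraph _, fun u hu w hw hadj =>
      hw (SimpleGraph.ConnectedComponent.mem_supp_of_adj_mem_supp _ hu hadj)⟩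
  · obtain ⟨walk⟩ := (SimpleGraph.ConnectedComponent.exact hw).symm
    by_contra hwS
    obtain ⟨dart, -, hfst, hsnd⟩ := walk.exists_boundary_dart S hv hwS
    exact hclosed _ hfst _ hsnd dart.adj
  · exact SimpleGraph.ConnectedComponent.sound
      ((hconn.preconnected ⟨w, hw⟩ ⟨v, hv⟩).map (SimpleGraph.Embedding.induce S).toHom)

theorem connected_induce_range_iff {f : A → V} (hf : Function.Injective f) :
    (G.induce (Set.range f)).Connected ↔ (G.comap f).Connected :=
  let iso : G.comap f ≃g G.induce (Set.range f) := ⟨Equiv.ofInjective f hf, Iff.rfl⟩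
  iso.connected_iff.symm

variable {f : A ↪ V} {f' : B ↪ V}

theorem connectedComponentMk_supp_eq_range_iff (hff' : IsCompl (Set.range f) (Set.range f'))
    (a : A) :
    (G.connectedComponentMk (f a)).supp = Set.range f ↔
      (G.comap f).Connected ∧ ∀ a b, ¬G.Adj (f a) (f' b) := by
  rw [connectedComponentMk_supp_eq_iff (Set.mem_range_self a),
    connected_induce_range_iff f.injective]
  simp only [← Set.mem_compl_iff, hff'.compl_eq, Set.forall_mem_range]

theorem not_adj_map_sup_map (hff' : Disjoint (Set.range f) (Set.range f')) (H : SimpleGraph A)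
    (K : SimpleGraph B) (a : A) (b : B) : ¬(H.map f ⊔ K.map f').Adj (f a) (f' b) := by
  have hne (a : A) (b : B) : f a ≠ f' b := Set.disjoint_range_iff.1 hff' a b
  rw [SimpleGraph.sup_adj, SimpleGraph.map_adj, SimpleGraph.map_adj]
  rintro (⟨_, _, -, -, h⟩ | ⟨_, _, -, h, -⟩)
  · exact hne _ _ h
  · exact hne _ _ h.symm

theorem comap_map_sup_map (hff' : Disjoint (Set.range f) (Set.range f')) (H : SimpleGraph A)
    (K : SimpleGraph B) : (H.map f ⊔ K.map f').comap f = H := by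
  have hne (a : A) (b : B) : f' b ≠ f a := (Set.disjoint_range_iff.1 hff' a b).symm
  ext u v
  simp [hne]

theorem map_comap_sup_map_comap (hff' : IsCompl (Set.range f) (Set.range f'))
    (hG : ∀ a b, ¬G.Adj (f a) (f' b)) : (G.comap f).map f ⊔ (G.comap f').map f' = G := by
  have hcover (v : V) : v ∈ Set.range f ∨ v ∈ Set.range f' :=
    hff'.codisjoint.top_le (Set.mem_univ v)
  refine le_antisymm (sup_le (SimpleGraph.map_comap_le _ _) (SimpleGraph.map_comap_le _ _)) ?_
  intro u v huv
  rw [SimpleGraph.sup_adj, SimpleGraph.map_adj, SimpleGraph.map_adj]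
  rcases hcover u with ⟨a, rfl⟩ | ⟨a, rfl⟩ <;> rcases hcover v with ⟨b, rfl⟩ | ⟨b, rfl⟩
  · exact Or.inl ⟨a, b, huv, rfl, rfl⟩
  · exact absurd huv (hG _ _)
  · exact absurd huv.symm (hG _ _)
  · exact Or.inr ⟨a, b, huv, rfl, rfl⟩

end Component

section Weight

theorem prod_eq_prod_mul_prod_of_isCompl_range {V A B M : Type*} [Fintype V]
    [Fintype A] [Fintype B] [CommMonoid M] {f : A ↪ V} {f' : B ↪ V}
    (hff' : IsCompl (Set.range f) (Set.range f')) (F : V → M) :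
    ∏ v, F v = (∏ a, F (f a)) * ∏ b, F (f' b) := by
  have hbij : Function.Bijective (Sum.elim f f') :=
    ⟨f.injective.sumElim f'.injective (Set.disjoint_range_iff.1 hff'.disjoint),
      Set.range_eq_univ.1 <| by rw [Set.Sum.elim_range]; exact hff'.sup_eq_top⟩
  rw [← (Equiv.ofBijective _ hbij).prod_comp, Fintype.prod_sum_type]
  rfl

variable {E R V A B : Type*} [CommSemiring R] (h : E → E → R)
variable [Fintype V] [LinearOrder V] [Fintype A] [LinearOrder A] [Fintype B] [LinearOrder B]

open Classical in
/-- The Mayer weight `∏_{{i,j} ∈ E(G)} h(z_i, z_j)`, each edge being read in increasing order so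
that `h` need not be symmetric. -/
noncomputable def edgeWeight (G : SimpleGraph V) (z : V → E) : R :=
  ∏ p : V × V with p.1 < p.2 ∧ G.Adj p.1 p.2, h (z p.1) (z p.2)

open Classical in
theorem edgeWeight_eq_prod_ite (G : SimpleGraph V) (z : V → E) :
    edgeWeight h G z = ∏ a, ∏ b, if a < b ∧ G.Adj a b then h (z a) (z b) else 1 := by
  rw [edgeWeight, prod_filter, Fintype.prod_prod_type]

open Classical in
/-- The sum of the Mayer weights of all graphs on the vertex set of `z`. -/
noncomputable def graphSum (z : V → E) : R := ∑ G : SimpleGraph V, edgeWeight h G z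

open Classical in
/-- The sum of the Mayer weights of all connected graphs on the vertex set of `z`. -/
noncomputable def connectedGraphSum (z : V → E) : R :=
  ∑ G : SimpleGraph V with G.Connected, edgeWeight h G z

variable {f : A ↪ V} {f' : B ↪ V}

theorem edgeWeight_eq_mul (hff' : IsCompl (Set.range f) (Set.range f')) (hf : StrictMono f)
    (hf' : StrictMono f') {G : SimpleGraph V} (hG : ∀ a b, ¬G.Adj (f a) (f' b)) (z : V → E) :
    edgeWeight h G z = edgeWeight h (G.comap f) (z ∘ f) * edgeWeight h (G.comap f') (z ∘ f') := by
  classical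
  have hG' (a : A) (b : B) : ¬G.Adj (f' b) (f a) := fun hadj => hG a b hadj.symm
  simp only [edgeWeight_eq_prod_ite, prod_eq_prod_mul_prod_of_isCompl_range hff', hG, hG',
    and_false, if_false, prod_const_one, one_mul, mul_one, hf.lt_iff_lt, hf'.lt_iff_lt,
    SimpleGraph.comap_adj, Function.comp_apply]

open Classical in
theorem sum_edgeWeight_component_eq (hff' : IsCompl (Set.range f) (Set.range f'))
    (hf : StrictMono f) (hf' : StrictMono f') (a : A) (z : V → E) :
    ∑ G : SimpleGraph V with (G.connectedComponentMk (f a)).supp = Set.range f, edgeWeight h G z =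
      connectedGraphSum h (z ∘ f) * graphSum h (z ∘ f') := by
  simp only [connectedComponentMk_supp_eq_range_iff hff']
  rw [connectedGraphSum, graphSum, sum_mul_sum, ← sum_product']
  refine sum_bij' (fun G _ => (G.comap f, G.comap f')) (fun p _ => p.1.map f ⊔ p.2.map f')
    ?_ ?_ ?_ ?_ ?_
  · intro G hG
    simpa using (mem_filter.1 hG).2.1
  · rintro ⟨H, K⟩ hHK
    rw [mem_filter, comap_map_sup_map hff'.disjoint]
    exact ⟨mem_univ _, by simpa using hHK, not_adj_map_sup_map hff'.disjoint H K⟩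
  · exact fun G hG => map_comap_sup_map_comap hff' (mem_filter.1 hG).2.2
  · rintro ⟨H, K⟩ -
    refine Prod.ext (comap_map_sup_map hff'.disjoint H K) ?_
    dsimp only
    rw [sup_comm, comap_map_sup_map hff'.disjoint.symm]
  · exact fun G hG => edgeWeight_eq_mul h hff' hf hf' (mem_filter.1 hG).2.2 z

-- Graphs are classified by the connected component `S` of the vertex `v`.
theorem graphSum_eq_sum_connectedGraphSum_mul (v : V) (z : V → E) :
    graphSum h z = ∑ S : Finset V with v ∈ S,
      connectedGraphSum h (z ∘ S.orderEmbOfFin rfl) * graphSum h (z ∘ Sᶜ.orderEmbOfFin rfl) := by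
  classical
  rw [graphSum, sum_filter, ← sum_fiberwise (s := univ)
    (g := fun G : SimpleGraph V => (G.connectedComponentMk v).supp.toFinset)]
  refine sum_congr rfl fun S _ => ?_
  simp only [← coe_inj, Set.coe_toFinset]
  split_ifs with hv
  · have hrange := range_orderEmbOfFin S rfl
    have hff' : IsCompl (Set.range (S.orderEmbOfFin rfl)) (Set.range (Sᶜ.orderEmbOfFin rfl)) := by
      rw [hrange, range_orderEmbOfFin, coe_compl]
      exact isCompl_compl
    obtain ⟨a, rfl⟩ : v ∈ Set.range (S.orderEmbOfFin rfl) := by rwa [hrange]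
    rw [← hrange]
    exact sum_edgeWeight_component_eq h (f := (S.orderEmbOfFin rfl).toEmbedding)
      (f' := (Sᶜ.orderEmbOfFin rfl).toEmbedding) hff' (OrderEmbedding.strictMono _)
      (OrderEmbedding.strictMono _) a z
  · refine sum_eq_zero fun G hG => absurd ?_ hv
    rw [← mem_coe, ← (mem_filter.1 hG).2]
    rfl

end Weight

section Cone

variable {E R : Type*} {n : ℕ}

/-- The graph on `Fin (n + 1)` obtained from `H`, shifted by one, by joining the new vertex `0` to
the vertices of `T`. -/
def cone (T : Finset (Fin n)) (H : SimpleGraph (Fin n)) : SimpleGraph (Fin (n + 1)) :=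
  H.map (Fin.succEmb n) ⊔ SimpleGraph.fromRel fun u v => u = 0 ∧ v ∈ T.map (Fin.succEmb n)

variable {T : Finset (Fin n)} {H : SimpleGraph (Fin n)}

theorem cone_adj_zero_succ {i : Fin n} : (cone T H).Adj 0 i.succ ↔ i ∈ T := by
  simp [cone, SimpleGraph.map_adj', (Fin.succ_ne_zero _).symm]

theorem cone_adj_succ_succ {i j : Fin n} : (cone T H).Adj i.succ j.succ ↔ H.Adj i j := by
  simpa [cone, SimpleGraph.map_adj'] using SimpleGraph.Adj.ne

theorem comap_succ_cone : (cone T H).comap Fin.succ = H :=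
  SimpleGraph.ext <| funext₂ fun _ _ => propext cone_adj_succ_succ

theorem cone_comap_succ (G : SimpleGraph (Fin (n + 1))) [DecidableRel G.Adj] :
    cone {i | G.Adj 0 i.succ} (G.comap Fin.succ) = G := by
  ext u v
  cases u using Fin.cases <;> cases v using Fin.cases
  · simp
  · simp [cone_adj_zero_succ]
  · rw [SimpleGraph.adj_comm, G.adj_comm]
    simp [cone_adj_zero_succ]
  · simp [cone_adj_succ_succ]

open Classical in
theorem sum_simpleGraph_fin_succ {M : Type*} [AddCommMonoid M]
    (F : SimpleGraph (Fin (n + 1)) → M) : ∑ G, F G = ∑ T, ∑ H, F (cone T H) := by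
  rw [← Fintype.sum_prod_type']
  symm
  exact Fintype.sum_equiv
    { toFun p := cone p.1 p.2
      invFun G := (({i | G.Adj 0 i.succ} : Finset (Fin n)), G.comap Fin.succ)
      left_inv p := Prod.ext (by ext; simp [cone_adj_zero_succ]) comap_succ_cone
      right_inv G := cone_comap_succ G } _ _ fun _ => rfl

theorem nonempty_of_cone_adj_zero {v : Fin (n + 1)} (hv : (cone T H).Adj 0 v) : T.Nonempty := by
  cases v using Fin.cases with
  | zero => exact absurd hv (SimpleGraph.irrefl _)
  | succ i => exact ⟨i, cone_adj_zero_succ.1 hv⟩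

theorem cone_connected_iff (hH : H.Connected) : (cone T H).Connected ↔ T.Nonempty := by
  constructor
  · intro hcone
    obtain ⟨j⟩ := hH.nonempty
    have : Nontrivial (Fin (n + 1)) := ⟨0, j.succ, (Fin.succ_ne_zero j).symm⟩
    obtain ⟨v, hv⟩ := hcone.preconnected.exists_adj_of_nontrivial 0
    exact nonempty_of_cone_adj_zero hv
  · rintro ⟨i, hi⟩
    let succHom : H →g cone T H := ⟨Fin.succ, cone_adj_succ_succ.2⟩
    refine (SimpleGraph.connected_iff_exists_forall_reachable _).2 ⟨i.succ, fun v => ?_⟩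
    cases v using Fin.cases with
    | zero => exact (cone_adj_zero_succ.2 hi).symm.reachable
    | succ j => exact (hH.preconnected i j).map succHom

theorem cone_connected_and_induce_connected_iff :
    (cone T H).Connected ∧ ((cone T H).induce {v | v ≠ 0}).Connected ↔
      T.Nonempty ∧ H.Connected := by
  have hrange : {v : Fin (n + 1) | v ≠ 0} = Set.range Fin.succ := (Fin.range_succ n).symm
  rw [hrange, connected_induce_range_iff (Fin.succ_injective n), comap_succ_cone]
  exact and_congr_left cone_connected_iff

theorem cone_cone_connected_and_induce_connected_iff {T₁ : Finset (Fin (n + 1))}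
    {T₂ : Finset (Fin n)} :
    (cone T₁ (cone T₂ H)).Connected ∧ ¬(cone T₁ (cone T₂ H)).Adj 0 1 ∧
        ((cone T₁ (cone T₂ H)).induce {v | v ≠ 0 ∧ v ≠ 1}).Connected ↔
      (0 ∉ T₁ ∧ T₁.Nonempty) ∧ T₂.Nonempty ∧ H.Connected := by
  have hrange : {v : Fin (n + 2) | v ≠ 0 ∧ v ≠ 1} = Set.range (Fin.succ ∘ Fin.succ) := by
    ext v
    cases v using Fin.cases with
    | zero => simp
    | succ u => cases u using Fin.cases <;> simp [Fin.succ_succ_ne_one]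
  have hinj := (Fin.succ_injective (n + 1)).comp (Fin.succ_injective n)
  rw [hrange, connected_induce_range_iff hinj, ← SimpleGraph.comap_comap, comap_succ_cone,
    comap_succ_cone, ← Fin.succ_zero_eq_one, cone_adj_zero_succ]
  constructor
  · rintro ⟨hconn, h0, hH⟩
    obtain ⟨u, hu⟩ := hconn.preconnected.exists_adj_of_nontrivial 0
    obtain ⟨v, hv⟩ := hconn.preconnected.exists_adj_of_nontrivial (Fin.succ 0)
    refine ⟨⟨h0, nonempty_of_cone_adj_zero hu⟩, ?_, hH⟩
    cases v using Fin.cases with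
    | zero => exact absurd (cone_adj_zero_succ.1 hv.symm) h0
    | succ v => exact nonempty_of_cone_adj_zero (cone_adj_succ_succ.1 hv)
  · rintro ⟨⟨h0, hT₁⟩, hT₂, hH⟩
    exact ⟨(cone_connected_iff ((cone_connected_iff hH).2 hT₂)).2 hT₁, h0, hH⟩

section CommSemiring

variable [CommSemiring R] (h : E → E → R)

theorem edgeWeight_cone (x : E) (y : Fin n → E) :
    edgeWeight h (cone T H) (Fin.cons x y : Fin (n + 1) → E) =
      (∏ i ∈ T, h x (y i)) * edgeWeight h H y := by
  classical
  simp only [edgeWeight_eq_prod_ite, Fin.prod_univ_succ, cone_adj_zero_succ, cone_adj_succ_succ,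
    Fin.succ_pos, Fin.succ_lt_succ_iff, Fin.not_lt_zero, false_and, true_and, if_false,
    one_mul, Fin.cons_zero, Fin.cons_succ, prod_ite_mem, univ_inter]

theorem graphSum_cons (x : E) (y : Fin n → E) :
    graphSum h (Fin.cons x y : Fin (n + 1) → E) = (∏ i, (1 + h x (y i))) * graphSum h y := by
  rw [graphSum, graphSum, sum_simpleGraph_fin_succ, prod_one_add, powerset_univ, sum_mul_sum]
  simp only [edgeWeight_cone]

end CommSemiring

variable [CommRing R] (h : E → E → R)

open Classical in
theorem sum_nonempty_prod {ι : Type*} [Fintype ι] (a : ι → R) :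
    ∑ T : Finset ι with T.Nonempty, ∏ i ∈ T, a i = ∏ i, (1 + a i) - 1 := by
  have hfilter : ({T | T.Nonempty} : Finset (Finset ι)) = univ.erase ∅ := by
    ext T
    simp [nonempty_iff_ne_empty]
  rw [prod_one_add, powerset_univ, hfilter, sum_erase_eq_sub (mem_univ ∅), prod_empty]

open Classical in
theorem sum_edgeWeight_one_root (x : E) (y : Fin n → E) :
    ∑ G : SimpleGraph (Fin (n + 1)) with G.Connected ∧ (G.induce {v | v ≠ 0}).Connected,
        edgeWeight h G (Fin.cons x y : Fin (n + 1) → E) =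
      (∏ i, (1 + h x (y i)) - 1) * connectedGraphSum h y := by
  rw [sum_filter, sum_simpleGraph_fin_succ]
  simp only [cone_connected_and_induce_connected_iff, edgeWeight_cone]
  rw [connectedGraphSum, ← sum_nonempty_prod, sum_filter, sum_filter, sum_mul_sum]
  simp only [ite_zero_mul_ite_zero]

open Classical in
theorem sum_zero_notMem_nonempty_prod (a : Fin (n + 1) → R) :
    ∑ T : Finset (Fin (n + 1)) with 0 ∉ T ∧ T.Nonempty, ∏ i ∈ T, a i =
      ∏ i : Fin n, (1 + a i.succ) - 1 := by
  rw [← sum_nonempty_prod, sum_filter, CF.sum_finset_fin_succ, sum_filter]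
  simp

open Classical in
theorem sum_edgeWeight_two_root (x₁ x₂ : E) (y : Fin n → E) :
    ∑ G : SimpleGraph (Fin (n + 2)) with
        G.Connected ∧ ¬G.Adj 0 1 ∧ (G.induce {v | v ≠ 0 ∧ v ≠ 1}).Connected,
        edgeWeight h G (Fin.cons x₁ (Fin.cons x₂ y : Fin (n + 1) → E) : Fin (n + 2) → E) =
      (∏ i, (1 + h x₁ (y i)) - 1) * ((∏ i, (1 + h x₂ (y i)) - 1) * connectedGraphSum h y) := by
  rw [sum_filter, sum_simpleGraph_fin_succ]
  simp only [sum_simpleGraph_fin_succ, cone_cone_connected_and_induce_connected_iff,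
    edgeWeight_cone]
  simp only [← ite_zero_mul_ite_zero, ← mul_sum, ← sum_mul, ← sum_filter]
  rw [sum_zero_notMem_nonempty_prod, sum_nonempty_prod, connectedGraphSum]
  simp only [Fin.cons_succ]

end Cone

section Mayer

variable {E : Type*} {n : ℕ}

theorem prod_lt_cons {M : Type*} [CommMonoid M] (g : E → E → M) (x : E) (y : Fin n → E) :
    ∏ p : Fin (n + 1) × Fin (n + 1) with p.1 < p.2,
        g ((Fin.cons x y : Fin (n + 1) → E) p.1) ((Fin.cons x y : Fin (n + 1) → E) p.2) =
      (∏ i, g x (y i)) * ∏ p : Fin n × Fin n with p.1 < p.2, g (y p.1) (y p.2) := by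
  simp only [prod_filter, Fintype.prod_prod_type, Fin.prod_univ_succ, Fin.succ_pos,
    Fin.succ_lt_succ_iff, Fin.not_lt_zero, if_true, if_false, one_mul, Fin.cons_zero, Fin.cons_succ]

theorem graphSum_eq_prod_one_add {R : Type*} [CommSemiring R] (h : E → E → R) (z : Fin n → E) :
    graphSum h z = ∏ p : Fin n × Fin n with p.1 < p.2, (1 + h (z p.1) (z p.2)) := by
  induction n with
  | zero => simp [graphSum, edgeWeight]
  | succ n ih =>
    rw [← Fin.cons_self_tail z, graphSum_cons, prod_lt_cons fun a b => 1 + h a b, ih]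

end Mayer

end GraphExpansion

namespace CF.ConvAlg

open GraphExpansion

variable {E : Type}

/-- The correlation functional `ρ` of the Kirkwood closure, with activity `ς` and pair function `g`
of both points. -/
noncomputable def kirkwood (ς : ℝ) (g : E → E → ℝ) : ConvAlg E := fun n z =>
  ς ^ n * ∏ p : Fin n × Fin n with p.1 < p.2, g (z p.1) (z p.2)

/-- The connected graph sums `ς^n ∑_{G connected} ∏_{{i,j} ∈ E(G)} h(z_i, z_j)`: the truncated
functional `ρ_T` of the Kirkwood closure. -/
noncomputable def ursell (ς : ℝ) (h : E → E → ℝ) : ConvAlg E := fun n z =>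
  ς ^ n * connectedGraphSum h z

theorem coeff_kirkwood (ς : ℝ) (g : E → E → ℝ) {n : ℕ} (z : Fin n → E) :
    coeff z (kirkwood ς g) = ς ^ n * ∏ p : Fin n × Fin n with p.1 < p.2, g (z p.1) (z p.2) := rfl

theorem coeff_ursell (ς : ℝ) (h : E → E → ℝ) {n : ℕ} (z : Fin n → E) :
    coeff z (ursell ς h) = ς ^ n * connectedGraphSum h z := rfl

theorem constantCoeff_kirkwood (ς : ℝ) (g : E → E → ℝ) : constantCoeff (kirkwood ς g) = 1 := by
  rw [← coeff_fin_zero _ Fin.elim0, coeff_kirkwood]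
  simp

theorem constantCoeff_ursell (ς : ℝ) (h : E → E → ℝ) : constantCoeff (ursell ς h) = 0 := by
  have not_connected (G : SimpleGraph (Fin 0)) : ¬G.Connected := fun hG => hG.nonempty.some.elim0
  rw [← coeff_fin_zero _ Fin.elim0, coeff_ursell, connectedGraphSum]
  simp [not_connected]

theorem deriv_kirkwood (ς : ℝ) (g : E → E → ℝ) (x : E) :
    deriv x (kirkwood ς g) = ς • rescale (g x) (kirkwood ς g) := by
  refine ext fun n y => ?_
  rw [coeff_deriv, map_smul, coeff_rescale, coeff_kirkwood, coeff_kirkwood, prod_lt_cons,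
    smul_eq_mul]
  ring

theorem deriv_kirkwood_one_add (ς : ℝ) (h : E → E → ℝ) (x : E) :
    deriv x (kirkwood ς fun a b => 1 + h a b) =
      deriv x (ursell ς h) * kirkwood ς fun a b => 1 + h a b := by
  refine ext fun n y => ?_
  rw [coeff_deriv, coeff_kirkwood, ← graphSum_eq_prod_one_add,
    graphSum_eq_sum_connectedGraphSum_mul h 0, mul_sum, coeff_deriv_mul]
  refine sum_congr rfl fun S _ => ?_
  have hcard : S.card + Sᶜ.card = n + 1 := by rw [card_add_card_compl, Fintype.card_fin]
  rw [coeff_ursell, coeff_kirkwood, ← graphSum_eq_prod_one_add, mul_mul_mul_comm, ← pow_add, hcard]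
  rfl

theorem exp_ursell (ς : ℝ) (h : E → E → ℝ) :
    exp (ursell ς h) = kirkwood ς fun a b => 1 + h a b :=
  eq_of_deriv_eq_mul
    (by rw [constantCoeff_exp (constantCoeff_ursell ς h), constantCoeff_kirkwood])
    (deriv_exp (constantCoeff_ursell ς h)) (deriv_kirkwood_one_add ς h)

theorem deriv_exp_ursell (ς : ℝ) (h : E → E → ℝ) (x : E) :
    deriv x (exp (ursell ς h)) = ς • rescale (fun b => 1 + h x b) (exp (ursell ς h)) := by
  rw [exp_ursell, deriv_kirkwood]

theorem coeff_pair_kirkwood (ς : ℝ) (g : E → E → ℝ) (x₁ x₂ : E) :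
    coeff ![x₁, x₂] (kirkwood ς g) = ς ^ 2 * g x₁ x₂ := by
  rw [coeff_kirkwood, prod_filter, Fintype.prod_prod_type]
  simp

open Classical in
theorem coeff_rescaleDiff_ursell (ς : ℝ) (h : E → E → ℝ) (x : E) {n : ℕ} (y : Fin n → E) :
    coeff y (rescaleDiff (fun b => 1 + h x b) (ursell ς h)) = ς ^ n *
      ∑ G : SimpleGraph (Fin (n + 1)) with G.Connected ∧ (G.induce {v | v ≠ 0}).Connected,
        edgeWeight h G (Fin.cons x y : Fin (n + 1) → E) := by
  rw [coeff_rescaleDiff, coeff_ursell, sum_edgeWeight_one_root, mul_left_comm]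

open Classical in
theorem coeff_rescaleDiff_rescaleDiff_ursell (ς : ℝ) (h : E → E → ℝ) (x₁ x₂ : E) {n : ℕ}
    (y : Fin n → E) :
    coeff y (rescaleDiff (fun b => 1 + h x₂ b) (rescaleDiff (fun b => 1 + h x₁ b) (ursell ς h))) =
      ς ^ n * ∑ G : SimpleGraph (Fin (n + 2)) with
          G.Connected ∧ ¬G.Adj 0 1 ∧ (G.induce {v | v ≠ 0 ∧ v ≠ 1}).Connected,
        edgeWeight h G (Fin.cons x₁ (Fin.cons x₂ y : Fin (n + 1) → E) : Fin (n + 2) → E) := by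
  rw [coeff_rescaleDiff, coeff_rescaleDiff, coeff_ursell, sum_edgeWeight_two_root]
  ring

end CF.ConvAlg

open CF Finset in
open Classical in
theorem kirkwood_kernels_graph_representation_general {E : Type} (ς : ℝ) (hς : ς ≠ 0)
    (g h : E → E → ℝ) (hg_symm : ∀ a b, g a b = g b a) (hh : ∀ a b, h a b = g a b - 1)
    (ρ ρT : CF E)
    (hρ : ∀ (n : ℕ) (x : Fin n → E),
      ρ n x = ς ^ n * ∏ p : Fin n × Fin n with p.1 < p.2, g (x p.1) (x p.2))
    (hρT0 : ρT 0 = 0) (hρTexp : starExp ρT = ρ)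
    (ωx : E → CF E) (hωx : ∀ x, ωx x 0 = 0 ∧ D x ρT = ς • starExp (ωx x))
    (ω : E → E → CF E)
    (hω : ∀ x₁ x₂, g x₁ x₂ ≠ 0 → ω x₁ x₂ 0 = 0 ∧
      (ρ 2 ![x₁, x₂])⁻¹ • D2 x₁ x₂ ρT =
        conv (conv (starExp (ω x₁ x₂) - (ς ^ 2 / ρ 2 ![x₁, x₂]) • unit) (ς⁻¹ • D x₁ ρT))
          (ς⁻¹ • D x₂ ρT)) :
    (∀ (x : E) (k : ℕ) (y : Fin k → E),
      ωx x k y = ς ^ k *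
        ∑ G : SimpleGraph (Fin (k + 1)) with G.Connected ∧ (G.induce {v | v ≠ 0}).Connected,
          ∏ p : Fin (k + 1) × Fin (k + 1) with p.1 < p.2 ∧ G.Adj p.1 p.2,
            h ((Fin.cons x y : Fin (k + 1) → E) p.1) ((Fin.cons x y : Fin (k + 1) → E) p.2)) ∧
    (∀ (x₁ x₂ : E), g x₁ x₂ ≠ 0 → ∀ (k : ℕ) (y : Fin k → E),
      ω x₁ x₂ k y = ς ^ k *
        ∑ G : SimpleGraph (Fin (k + 2)) with G.Connected ∧ ¬G.Adj 0 1 ∧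
            (G.induce {v | v ≠ 0 ∧ v ≠ 1}).Connected,
          ∏ p : Fin (k + 2) × Fin (k + 2) with p.1 < p.2 ∧ G.Adj p.1 p.2,
            h ((Fin.cons x₁ (Fin.cons x₂ y) : Fin (k + 2) → E) p.1)
              ((Fin.cons x₁ (Fin.cons x₂ y) : Fin (k + 2) → E) p.2)) := by
  obtain rfl : g = fun a b => 1 + h a b := by
    funext a b
    rw [hh, add_sub_cancel]
  obtain rfl : ρ = ConvAlg.kirkwood ς fun a b => 1 + h a b := funext₂ hρ
  obtain rfl : ρT = ConvAlg.ursell ς h :=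
    ConvAlg.exp_injOn (congrFun hρT0 _) (ConvAlg.constantCoeff_ursell ς h)
      (hρTexp.trans (ConvAlg.exp_ursell ς h).symm)
  refine ⟨fun x k y => ?_, fun x₁ x₂ hg k y => ?_⟩
  · obtain ⟨hωx0, hωx_eq⟩ := hωx x
    have ωx_eq := ConvAlg.eq_rescaleDiff_of_deriv_eq hς (ConvAlg.constantCoeff_ursell ς h)
      (ConvAlg.deriv_exp_ursell ς h x) (congrFun hωx0 _) hωx_eq
    rw [ωx_eq]
    exact ConvAlg.coeff_rescaleDiff_ursell ς h x y
  · obtain ⟨hω0, hω_eq⟩ := hω x₁ x₂ hg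
    have ρ_pair : ConvAlg.kirkwood ς (fun a b => 1 + h a b) 2 ![x₁, x₂] = ς ^ 2 * (1 + h x₂ x₁) :=
      (ConvAlg.coeff_pair_kirkwood ς (fun a b => 1 + h a b) x₁ x₂).trans <|
        congrArg (ς ^ 2 * ·) (hg_symm x₁ x₂)
    rw [ρ_pair] at hω_eq
    have ω_eq := ConvAlg.eq_rescaleDiff_rescaleDiff_of_deriv_deriv_eq
      (m₂ := fun b => 1 + h x₂ b) hς ((hg_symm x₂ x₁).trans_ne hg)
      (ConvAlg.constantCoeff_ursell ς h) (ConvAlg.deriv_exp_ursell ς h x₁)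
      (ConvAlg.deriv_exp_ursell ς h x₂) (congrFun hω0 _) hω_eq
    rw [ω_eq]
    exact ConvAlg.coeff_rescaleDiff_rescaleDiff_ursell ς h x₁ x₂ y

open CF Finset in
open Classical in
/-- eqs. (4.5)–(4.6): graph representation of the kernels `ω_x` and
`ω_{(x₁,x₂)}` for the Kirkwood closure process. -/
theorem kirkwood_kernels_graph_representation (d : ℕ) (hd : 1 ≤ d)
    (ς : ℝ) (hς : 0 < ς) (g h : Euc d → ℝ)
    (hg_even : ∀ z, g (-z) = g z) (hg_nonneg : ∀ z, 0 ≤ g z)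
    (hh : ∀ z, h z = g z - 1)
    (ρ ρT : CF (Euc d))
    (hρ : ∀ (n : ℕ) (x : Fin n → Euc d),
      ρ n x = ς ^ n *
        ∏ p ∈ (Finset.univ : Finset (Fin n × Fin n)).filter (fun p => p.1 < p.2),
          g (x p.1 - x p.2))
    (hρT0 : ρT 0 = 0) (hρTsymm : IsSymm ρT) (hρTexp : starExp ρT = ρ)
    (ωx : Euc d → CF (Euc d))
    (hωx : ∀ x : Euc d, ωx x 0 = 0 ∧ IsSymm (ωx x) ∧ D x ρT = ς • starExp (ωx x))
    (ω : Euc d → Euc d → CF (Euc d))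
    (hω : ∀ x₁ x₂ : Euc d, g (x₁ - x₂) ≠ 0 →
      ω x₁ x₂ 0 = 0 ∧ IsSymm (ω x₁ x₂) ∧
        (ρ 2 ![x₁, x₂])⁻¹ • D2 x₁ x₂ ρT =
          conv (conv (starExp (ω x₁ x₂) - (ς ^ 2 / ρ 2 ![x₁, x₂]) • unit)
              (ς⁻¹ • D x₁ ρT))
            (ς⁻¹ • D x₂ ρT)) :
    -- (i) the one-point kernels
    (∀ (x : Euc d) (k : ℕ), 1 ≤ k → ∀ y : Fin k → Euc d,
      ωx x k y = ς ^ k *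
        ∑ G ∈ (Finset.univ : Finset (SimpleGraph (Fin (k + 1)))).filter
            (fun G => G.Connected ∧
              (G.induce {v : Fin (k + 1) | v ≠ 0}).Connected),
          ∏ p ∈ (Finset.univ : Finset (Fin (k + 1) × Fin (k + 1))).filter
              (fun p => p.1 < p.2 ∧ G.Adj p.1 p.2),
            h ((Fin.cons x y : Fin (k + 1) → Euc d) p.1 - (Fin.cons x y : Fin (k + 1) → Euc d) p.2)) ∧
    -- (ii) the two-point kernels
    (∀ (x₁ x₂ : Euc d), g (x₁ - x₂) ≠ 0 → ∀ (k : ℕ), 1 ≤ k → ∀ y : Fin k → Euc d,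
      ω x₁ x₂ k y = ς ^ k *
        ∑ G ∈ (Finset.univ : Finset (SimpleGraph (Fin (k + 2)))).filter
            (fun G => G.Connected ∧ ¬ G.Adj 0 1 ∧
              (G.induce {v : Fin (k + 2) | v ≠ 0 ∧ v ≠ 1}).Connected),
          ∏ p ∈ (Finset.univ : Finset (Fin (k + 2) × Fin (k + 2))).filter
              (fun p => p.1 < p.2 ∧ G.Adj p.1 p.2),
            h ((Fin.cons x₁ (Fin.cons x₂ y) : Fin (k + 2) → Euc d) p.1 - (Fin.cons x₁ (Fin.cons x₂ y) : Fin (k + 2) → Euc d) p.2)) := by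
  obtain ⟨one_point, two_point⟩ := kirkwood_kernels_graph_representation_general ς hς.ne'
    (fun a b => g (a - b)) (fun a b => h (a - b)) (fun a b => by rw [← hg_even, neg_sub])
    (fun a b => hh (a - b)) ρ ρT hρ hρT0 hρTexp ωx (fun x => ⟨(hωx x).1, (hωx x).2.2⟩)
    ω fun x₁ x₂ hg => ⟨(hω x₁ x₂ hg).1, (hω x₁ x₂ hg).2.2⟩
  exact ⟨fun x k _ => one_point x k, fun x₁ x₂ hg k _ => two_point x₁ x₂ hg k⟩
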